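/- Let {b_i} and {c_i} be two mutually unbiased orthonormal bases of ℂ^d and let ρ = Σ_k p_k |φ_k⟩⟨φ_k| ⊗ |χ_k⟩⟨χ_k| be a separable density operator on ℂ^d ⊗ ℂ^d (p_k ≥ 0, Σ_k p_k = 1, φ_k, χ_k unit vectors). Then I₂(ρ) = Σ_i ⟨b_i ⊗ b_i|ρ|b_i ⊗ b_i⟩ + Σ_i ⟨c_i ⊗ c_i|ρ|c_i ⊗ c_i⟩ ≤ 1 + 1/d. -/

import Mathlib

/-!
By linearity in `ρ` the claim reduces to product states, where the mutual predictability in a basis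
`b` is `∑ i, |⟨b i|φ⟩|² |⟨b i|χ⟩|²` (`mutualPred_separable`). Since `xy ≤ (x² + y²) / 2`, it is enough
to bound `∑ i, |⟨b i|v⟩|⁴ + ∑ i, |⟨c i|v⟩|⁴ ≤ 1 + 1/d` for a single unit vector `v`
(`collision_le`). Writing `x i = |⟨b i|v⟩|²` and `y i = |⟨c i|v⟩|²`, this inequality is exactly
`0 ≤ tr X²` for the Hermitian matrix
`X = |v⟩⟨v| - ∑ i, x i |b i⟩⟨b i| - ∑ i, y i |c i⟩⟨c i| + 1/d`, the residual of the orthogonal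
projection of `|v⟩⟨v|` onto the span of the basis projectors.
-/

open BigOperators

/-- Inner product ⟨a|ψ⟩ in ℂ^d. -/
noncomputable def braket {d : ℕ} (a ψ : Fin d → ℂ) : ℂ :=
  ∑ x, (starRingEnd ℂ) (a x) * ψ x

/-- Mutual predictability of a density operator `ρ` on `ℂ^d ⊗ ℂ^d` in the basis
`b = {b_i}` : `C_B(ρ) = Σ_i ⟨b_i ⊗ b_i| ρ |b_i ⊗ b_i⟩`. -/
noncomputable def mutualPred {d : ℕ} (b : Fin d → Fin d → ℂ)
    (ρ : Matrix (Fin d × Fin d) (Fin d × Fin d) ℂ) : ℝ :=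
  (∑ i : Fin d, ∑ p : Fin d × Fin d, ∑ q : Fin d × Fin d,
    (starRingEnd ℂ) (b i p.1 * b i p.2) * ρ p q * (b i q.1 * b i q.2)).re

open Matrix

/-- The rank-one operator `|v⟩⟨v|`. -/
noncomputable def ketbra {d : ℕ} (v : Fin d → ℂ) : Matrix (Fin d) (Fin d) ℂ :=
  vecMulVec v (star v)

lemma trace_ketbra_mul {d : ℕ} (u v : Fin d → ℂ) :
    (ketbra u * ketbra v).trace = ((‖braket u v‖ ^ 2 : ℝ) : ℂ) := by
  have h : (ketbra u * ketbra v).trace = braket u v * (starRingEnd ℂ) (braket u v) := by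
    simp only [ketbra, braket, trace, diag, mul_apply, vecMulVec_apply, Pi.star_apply, map_sum,
      map_mul, Finset.sum_mul_sum, RCLike.star_def, Complex.conj_conj]
    rw [Finset.sum_comm]
    refine Finset.sum_congr rfl fun i _ => Finset.sum_congr rfl fun j _ => ?_
    ring
  rw [h, Complex.mul_conj, Complex.normSq_eq_norm_sq]

lemma trace_ketbra {d : ℕ} (v : Fin d → ℂ) :
    (ketbra v).trace = ((∑ x, ‖v x‖ ^ 2 : ℝ) : ℂ) := by
  simp only [ketbra, trace, diag, vecMulVec_apply, Pi.star_apply, RCLike.star_def,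
    Complex.mul_conj, Complex.normSq_eq_norm_sq]
  push_cast
  rfl

lemma ketbra_conjTranspose {d : ℕ} (v : Fin d → ℂ) : (ketbra v)ᴴ = ketbra v := by
  simp [ketbra, conjTranspose_vecMulVec]

/-- Completeness relation of an orthonormal family of `d` vectors in `ℂ^d`. -/
lemma sum_ketbra {d : ℕ} (b : Fin d → Fin d → ℂ)
    (hb : ∀ i j, braket (b i) (b j) = if i = j then 1 else 0) :
    ∑ i, ketbra (b i) = 1 := by
  have h1 : (of b).map star * (of b)ᵀ = 1 := by
    ext i j
    simpa [mul_apply, one_apply, braket] using hb i j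
  have h2 := mul_eq_one_comm.mp h1
  rw [← h2]
  ext i j
  simp [mul_apply, ketbra, vecMulVec_apply, Matrix.sum_apply]

lemma parseval {d : ℕ} (b : Fin d → Fin d → ℂ)
    (hb : ∀ i j, braket (b i) (b j) = if i = j then 1 else 0) (v : Fin d → ℂ) :
    ∑ i, ‖braket (b i) v‖ ^ 2 = ∑ x, ‖v x‖ ^ 2 := by
  have h : ((∑ i, ketbra (b i)) * ketbra v).trace = (ketbra v).trace := by
    rw [sum_ketbra b hb, one_mul]
  rw [Finset.sum_mul, trace_sum, trace_ketbra] at h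
  simp only [trace_ketbra_mul] at h
  exact_mod_cast h

/-- Linear combinations of projectors are paired by `tr (A B)` through the squared overlaps. -/
lemma trace_comb_mul {d m n : ℕ} (x : Fin m → ℝ) (y : Fin n → ℝ) (b : Fin m → Fin d → ℂ)
    (c : Fin n → Fin d → ℂ) :
    ((∑ i, (x i : ℂ) • ketbra (b i)) * (∑ j, (y j : ℂ) • ketbra (c j))).trace
      = ((∑ i, ∑ j, x i * y j * ‖braket (b i) (c j)‖ ^ 2 : ℝ) : ℂ) := by
  simp only [Finset.sum_mul_sum, trace_sum, smul_mul_smul_comm, trace_smul, trace_ketbra_mul,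
    smul_eq_mul]
  push_cast
  rfl

lemma trace_comb_mul_ketbra {d m : ℕ} (x : Fin m → ℝ) (b : Fin m → Fin d → ℂ) (v : Fin d → ℂ) :
    ((∑ i, (x i : ℂ) • ketbra (b i)) * ketbra v).trace
      = ((∑ i, x i * ‖braket (b i) v‖ ^ 2 : ℝ) : ℂ) := by
  simp only [Finset.sum_mul, trace_sum, smul_mul_assoc, trace_smul, trace_ketbra_mul,
    smul_eq_mul]
  push_cast
  rfl

lemma trace_comb {d : ℕ} (x : Fin d → ℝ) (b : Fin d → Fin d → ℂ)
    (hb : ∀ i j, braket (b i) (b j) = if i = j then 1 else 0) :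
    (∑ i, (x i : ℂ) • ketbra (b i)).trace = ((∑ i, x i : ℝ) : ℂ) := by
  have h : ∀ i, (ketbra (b i)).trace = 1 := by
    intro i
    have h := hb i i
    rw [if_pos rfl] at h
    rw [← h]
    simp [ketbra, trace, braket, vecMulVec_apply, mul_comm]
  simp [trace_sum, trace_smul, h]

lemma comb_conjTranspose {d m : ℕ} (x : Fin m → ℝ) (b : Fin m → Fin d → ℂ) :
    (∑ i, (x i : ℂ) • ketbra (b i))ᴴ = ∑ i, (x i : ℂ) • ketbra (b i) := by
  simp [conjTranspose_sum, conjTranspose_smul, ketbra_conjTranspose]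

open scoped ComplexOrder in
/-- The collision probabilities of a unit vector in two mutually unbiased bases add up to at most
`1 + 1/d`. -/
lemma collision_le {d : ℕ} (b c : Fin d → Fin d → ℂ)
    (hb : ∀ i j, braket (b i) (b j) = if i = j then 1 else 0)
    (hc : ∀ i j, braket (c i) (c j) = if i = j then 1 else 0)
    (hmub : ∀ i j, ‖braket (b i) (c j)‖ ^ 2 = 1 / (d : ℝ))
    (v : Fin d → ℂ) (hv : ∑ x, ‖v x‖ ^ 2 = 1) :
    ∑ i, (‖braket (b i) v‖ ^ 2) ^ 2 + ∑ i, (‖braket (c i) v‖ ^ 2) ^ 2 ≤ 1 + 1 / (d : ℝ) := by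
  have hd : (d : ℝ) ≠ 0 := by
    rintro h
    have h0 : d = 0 := by exact_mod_cast h
    subst h0
    simp at hv
  have hdC : (d : ℂ) ≠ 0 := by exact_mod_cast hd
  have hx1 : ∑ i, ‖braket (b i) v‖ ^ 2 = 1 := (parseval b hb v).trans hv
  have hy1 : ∑ i, ‖braket (c i) v‖ ^ 2 = 1 := (parseval c hc v).trans hv
  set x : Fin d → ℝ := fun i => ‖braket (b i) v‖ ^ 2 with hx
  set y : Fin d → ℝ := fun i => ‖braket (c i) v‖ ^ 2 with hy
  change ∑ i, x i = 1 at hx1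
  change ∑ i, y i = 1 at hy1
  change ∑ i, x i ^ 2 + ∑ i, y i ^ 2 ≤ _
  set W := ∑ i, (x i : ℂ) • ketbra (b i) with hW
  set V := ∑ i, (y i : ℂ) • ketbra (c i) with hV
  set F := ketbra v with hF
  have hFF : (F * F).trace = 1 := by
    have hvv : braket v v = 1 := by
      have h : braket v v = (ketbra v).trace := by
        simp [ketbra, trace, braket, vecMulVec_apply, mul_comm]
      rw [h, trace_ketbra, hv]; simp
    rw [hF, trace_ketbra_mul, hvv]; simp
  have hFt : F.trace = 1 := by rw [hF, trace_ketbra, hv]; simp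
  have hWt : W.trace = 1 := by rw [hW, trace_comb x b hb, hx1]; simp
  have hVt : V.trace = 1 := by rw [hV, trace_comb y c hc, hy1]; simp
  have hWF : (W * F).trace = ((∑ i, x i ^ 2 : ℝ) : ℂ) := by
    rw [hW, hF, trace_comb_mul_ketbra]
    congr 1
    exact Finset.sum_congr rfl fun i _ => (sq (x i)).symm
  have hVF : (V * F).trace = ((∑ i, y i ^ 2 : ℝ) : ℂ) := by
    rw [hV, hF, trace_comb_mul_ketbra]
    congr 1
    exact Finset.sum_congr rfl fun i _ => (sq (y i)).symm
  have hWW : (W * W).trace = ((∑ i, x i ^ 2 : ℝ) : ℂ) := by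
    rw [hW, trace_comb_mul]
    congr 1
    refine Finset.sum_congr rfl fun i _ => ?_
    rw [Finset.sum_eq_single i]
    · simp [hb, sq]
    · intro j _ hj
      simp [hb, hj.symm]
    · simp
  have hVV : (V * V).trace = ((∑ i, y i ^ 2 : ℝ) : ℂ) := by
    rw [hV, trace_comb_mul]
    congr 1
    refine Finset.sum_congr rfl fun i _ => ?_
    rw [Finset.sum_eq_single i]
    · simp [hc, sq]
    · intro j _ hj
      simp [hc, hj.symm]
    · simp
  have hWV : (W * V).trace = 1 / (d : ℂ) := by
    rw [hW, hV, trace_comb_mul]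
    simp only [hmub, ← Finset.sum_mul, ← Finset.mul_sum, hx1, hy1]
    simp
  set e : ℂ := 1 / (d : ℂ) with he
  set X := F - W - V + e • (1 : Matrix (Fin d) (Fin d) ℂ) with hX
  have hXH : Xᴴ = X := by
    simp only [hX, conjTranspose_add, conjTranspose_sub, conjTranspose_smul, conjTranspose_one]
    rw [hF, hW, hV, ketbra_conjTranspose, comb_conjTranspose, comb_conjTranspose]
    simp [he]
  have hpos : 0 ≤ (Xᴴ * X).trace := (posSemidef_conjTranspose_mul_self X).trace_nonneg
  have hval : (X * X).trace
      = ((1 + 1 / (d : ℝ) - (∑ i, x i ^ 2 + ∑ i, y i ^ 2) : ℝ) : ℂ) := by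
    have hed : e * (d : ℂ) = 1 := by rw [he]; field_simp
    have hFW : (F * W).trace = _ := (trace_mul_comm F W).trans hWF
    have hFV : (F * V).trace = _ := (trace_mul_comm F V).trans hVF
    have hVW : (V * W).trace = _ := (trace_mul_comm V W).trans hWV
    simp only [hX, add_mul, sub_mul, mul_add, mul_sub, smul_mul_assoc, mul_smul_comm, one_mul,
      mul_one, trace_add, trace_sub, trace_smul, smul_eq_mul, trace_one, Fintype.card_fin,
      hFF, hFt, hWt, hVt, hWF, hVF, hWW, hVV, hWV, hFW, hFV, hVW, hed]
    push_cast
    rw [← he]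
    ring
  rw [hXH, hval] at hpos
  have hreal := Complex.zero_le_real.mp hpos
  linarith

/-- On a separable state the mutual predictability is the average of the products of the local
outcome probabilities. -/
lemma mutualPred_separable {d n : ℕ} (b : Fin d → Fin d → ℂ) (p : Fin n → ℝ)
    (φ χ : Fin n → Fin d → ℂ)
    (ρ : Matrix (Fin d × Fin d) (Fin d × Fin d) ℂ)
    (hρ : ∀ P Q : Fin d × Fin d, ρ P Q =
      ∑ k, (p k : ℂ) * (φ k P.1 * (starRingEnd ℂ) (φ k Q.1))
        * (χ k P.2 * (starRingEnd ℂ) (χ k Q.2))) :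
    mutualPred b ρ
      = ∑ k, p k * ∑ i, ‖braket (b i) (φ k)‖ ^ 2 * ‖braket (b i) (χ k)‖ ^ 2 := by
  have key : ∀ i k, ∑ P : Fin d × Fin d, ∑ Q : Fin d × Fin d,
      (starRingEnd ℂ) (b i P.1 * b i P.2) * ((p k : ℂ) * (φ k P.1 * (starRingEnd ℂ) (φ k Q.1))
        * (χ k P.2 * (starRingEnd ℂ) (χ k Q.2))) * (b i Q.1 * b i Q.2)
      = ((p k * (‖braket (b i) (φ k)‖ ^ 2 * ‖braket (b i) (χ k)‖ ^ 2) : ℝ) : ℂ) := by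
    intro i k
    have hT : ∑ P : Fin d × Fin d, (starRingEnd ℂ) (b i P.1 * b i P.2) * (φ k P.1 * χ k P.2)
        = braket (b i) (φ k) * braket (b i) (χ k) := by
      simp only [braket, Finset.sum_mul_sum, Fintype.sum_prod_type, map_mul]
      refine Finset.sum_congr rfl fun r _ => Finset.sum_congr rfl fun s _ => ?_
      ring
    have hR : ((p k * (‖braket (b i) (φ k)‖ ^ 2 * ‖braket (b i) (χ k)‖ ^ 2) : ℝ) : ℂ)
        = (p k : ℂ) * ((braket (b i) (φ k) * braket (b i) (χ k))
          * (starRingEnd ℂ) (braket (b i) (φ k) * braket (b i) (χ k))) := by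
      rw [Complex.mul_conj, Complex.normSq_eq_norm_sq, norm_mul, mul_pow]
      push_cast
      rfl
    rw [hR, ← hT, map_sum, Finset.sum_mul_sum, Finset.mul_sum]
    refine Finset.sum_congr rfl fun P _ => ?_
    rw [Finset.mul_sum]
    refine Finset.sum_congr rfl fun Q _ => ?_
    simp only [map_mul, Complex.conj_conj]
    ring
  have h : ∑ i : Fin d, ∑ P : Fin d × Fin d, ∑ Q : Fin d × Fin d,
      (starRingEnd ℂ) (b i P.1 * b i P.2) * ρ P Q * (b i Q.1 * b i Q.2)
      = ((∑ k, p k * ∑ i, ‖braket (b i) (φ k)‖ ^ 2 * ‖braket (b i) (χ k)‖ ^ 2 : ℝ) : ℂ) := by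
    simp only [Finset.mul_sum, Complex.ofReal_sum, ← key, hρ, Finset.sum_mul]
    refine Eq.trans (Finset.sum_congr rfl fun i _ => ?_) Finset.sum_comm
    refine Eq.trans (Finset.sum_congr rfl fun P _ => ?_) Finset.sum_comm
    exact Finset.sum_comm
  rw [mutualPred, h, Complex.ofReal_re]

/-- For two mutually unbiased orthonormal bases `{b_i}`, `{c_i}` of ℂ^d and a
separable density operator `ρ = Σ_k p_k |φ_k⟩⟨φ_k| ⊗ |χ_k⟩⟨χ_k|` on ℂ^d ⊗ ℂ^d,
one has `I₂(ρ) ≤ 1 + 1/d`. -/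
theorem stmt4 {d n : ℕ} (b c : Fin d → Fin d → ℂ)
    (hb : ∀ i j, braket (b i) (b j) = if i = j then 1 else 0)
    (hc : ∀ i j, braket (c i) (c j) = if i = j then 1 else 0)
    (hmub : ∀ i j, ‖braket (b i) (c j)‖ ^ 2 = 1 / (d : ℝ))
    (p : Fin n → ℝ) (hp : ∀ k, 0 ≤ p k) (hpsum : ∑ k, p k = 1)
    (φ χ : Fin n → Fin d → ℂ)
    (hφ : ∀ k, ∑ x, ‖φ k x‖ ^ 2 = 1) (hχ : ∀ k, ∑ x, ‖χ k x‖ ^ 2 = 1)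
    (ρ : Matrix (Fin d × Fin d) (Fin d × Fin d) ℂ)
    (hρ : ∀ P Q : Fin d × Fin d, ρ P Q =
      ∑ k, (p k : ℂ) * (φ k P.1 * (starRingEnd ℂ) (φ k Q.1))
        * (χ k P.2 * (starRingEnd ℂ) (χ k Q.2))) :
    mutualPred b ρ + mutualPred c ρ ≤ 1 + 1 / (d : ℝ) := by
  rw [mutualPred_separable b p φ χ ρ hρ, mutualPred_separable c p φ χ ρ hρ,
    ← Finset.sum_add_distrib]
  calc _ ≤ ∑ k, p k * (1 + 1 / (d : ℝ)) := by
        refine Finset.sum_le_sum fun k _ => ?_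
        rw [← mul_add]
        refine mul_le_mul_of_nonneg_left ?_ (hp k)
        have h1 := collision_le b c hb hc hmub (φ k) (hφ k)
        have h2 := collision_le b c hb hc hmub (χ k) (hχ k)
        have amgm : ∀ a : Fin d → Fin d → ℂ,
            ∑ i, ‖braket (a i) (φ k)‖ ^ 2 * ‖braket (a i) (χ k)‖ ^ 2
              ≤ (∑ i, (‖braket (a i) (φ k)‖ ^ 2) ^ 2
                + ∑ i, (‖braket (a i) (χ k)‖ ^ 2) ^ 2) / 2 := by
          intro a
          rw [← Finset.sum_add_distrib, Finset.sum_div]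
          refine Finset.sum_le_sum fun i _ => ?_
          linarith [two_mul_le_add_sq (‖braket (a i) (φ k)‖ ^ 2) (‖braket (a i) (χ k)‖ ^ 2)]
        linarith [amgm b, amgm c]
    _ = 1 + 1 / (d : ℝ) := by rw [← Finset.sum_mul, hpsum, one_mul]
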